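/- arXiv:1509.01691 — 4 statements merged into one kernel-verified Lean document; each statement's English description precedes it below -/
import Mathlib

section
/- Let (X,d) be a complete metric space and let σ be a conical geodesic bicombing on X that has the midpoint property. Let φ : X → X be a σ-equivariant isometry. If there is a point x₀ ∈ X and a compact subset K ⊆ X such that limsup_{k→∞} ( sup_{l≥0} (1/k) Σ_{i=0}^{k−1} 1_K(φ^{i+l}(x₀)) ) > 0, where 1_K is the indicator function of K, then there exists a point x⋆ in cl conv_σ({φ^k(x₀) : k ≥ 0}) such that φ(x⋆) = x⋆. -/
open Set

/-- A conical geodesic bicombing on a metric space. -/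
def IsConicalBicombing {X : Type*} [MetricSpace X] (σ : X → X → ℝ → X) : Prop :=
  (∀ x y : X, σ x y 0 = x) ∧ (∀ x y : X, σ x y 1 = y) ∧
  (∀ x y : X, ∀ s ∈ Icc (0:ℝ) 1, ∀ t ∈ Icc (0:ℝ) 1,
    dist (σ x y s) (σ x y t) = |s - t| * dist x y) ∧
  (∀ x x' y y' : X, ∀ t ∈ Icc (0:ℝ) 1,
    dist (σ x y t) (σ x' y' t) ≤ (1 - t) * dist x x' + t * dist y y')

/-- The midpoint property of a bicombing. -/
def MidpointProp {X : Type*} [MetricSpace X] (σ : X → X → ℝ → X) : Prop :=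
  ∀ x y : X, σ x y (1/2) = σ y x (1/2)

/-- A self-map is `σ`-equivariant. -/
def SigmaEquivariant {X : Type*} [MetricSpace X] (σ : X → X → ℝ → X) (φ : X → X) : Prop :=
  ∀ x y : X, ∀ t ∈ Icc (0:ℝ) 1, φ (σ x y t) = σ (φ x) (φ y) t

/-- The sets `A_k` in the inductive construction of the `σ`-convex hull. -/
def convSigmaSets {X : Type*} [MetricSpace X] (σ : X → X → ℝ → X) (A : Set X) : ℕ → Set X
  | 0 => A
  | k + 1 => {z | ∃ x ∈ convSigmaSets σ A k, ∃ y ∈ convSigmaSets σ A k,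
      ∃ t ∈ Icc (0:ℝ) 1, z = σ x y t}

/-- The `σ`-convex hull of a set. -/
def convSigma {X : Type*} [MetricSpace X] (σ : X → X → ℝ → X) (A : Set X) : Set X :=
  ⋃ k : ℕ, convSigmaSets σ A k

/-!
The visiting times of the orbit to some small ball have positive upper Banach density. A set of
integers of density `δ > 0` has at most `1 / δ` pairwise disjoint translates, so its difference
set is syndetic; as `φ` is an isometry, this makes the orbit of `x₀` totally bounded.

Now iterate the averaging map `T x = σ x (φ x) (1/2)`, which commutes with `φ`. The point
`T^[N] z` is a nested midpoint of `z, φ z, …, φ^[N] z` in which each of these points carries weight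
at least `2⁻ᴺ`. If they are `ε`-dense in the orbit of `z`, a bound `D` on the diameter of that orbit
improves to `(1 - 2⁻ᴺ) D + 2⁻ᴺ ε` for the orbit of `T^[N] z`. As the same `N` works for all the
points `T^[n] x₀`, their orbits shrink to a single point, which is fixed.
-/

open Filter Topology

section Density

/-- The proportion of the window `[l, l + k)` that is occupied by `A`; it is `0` for `k = 0`. -/
noncomputable def windowDensity (A : Set ℕ) (k l : ℕ) : ℝ :=
  (∑ i ∈ Finset.range k, A.indicator (fun _ => (1 : ℝ)) (i + l)) / k

/-- The upper Banach density of a set of natural numbers: the upper limit, as the length of the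
windows grows, of the largest proportion of a window that is occupied by the set. -/
noncomputable def upperBanachDensity (A : Set ℕ) : ℝ :=
  limsup (fun k => ⨆ l, windowDensity A k l) atTop

variable {A B : Set ℕ}

lemma windowDensity_nonneg (A : Set ℕ) (k l : ℕ) : 0 ≤ windowDensity A k l :=
  div_nonneg (Finset.sum_nonneg fun _ _ => indicator_nonneg (fun _ _ => zero_le_one) _)
    k.cast_nonneg

lemma windowDensity_le_one (A : Set ℕ) (k l : ℕ) : windowDensity A k l ≤ 1 := by
  refine div_le_one_of_le₀ ?_ k.cast_nonneg
  calc ∑ i ∈ Finset.range k, A.indicator (fun _ => (1 : ℝ)) (i + l)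
      ≤ ∑ _i ∈ Finset.range k, (1 : ℝ) :=
        Finset.sum_le_sum fun _ _ => indicator_apply_le' (fun _ => le_rfl) fun _ => zero_le_one
    _ = k := by simp

lemma windowDensity_mono (h : A ⊆ B) (k l : ℕ) : windowDensity A k l ≤ windowDensity B k l :=
  div_le_div_of_nonneg_right (Finset.sum_le_sum fun _ _ =>
    indicator_le_indicator_of_subset h (fun _ => zero_le_one) _) k.cast_nonneg

lemma windowDensity_union_le (A B : Set ℕ) (k l : ℕ) :
    windowDensity (A ∪ B) k l ≤ windowDensity A k l + windowDensity B k l := by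
  simp only [windowDensity, ← add_div, ← Finset.sum_add_distrib]
  gcongr with i
  by_cases hA : i + l ∈ A <;> by_cases hB : i + l ∈ B <;> simp [hA, hB]

lemma bddAbove_range_windowDensity (A : Set ℕ) (k : ℕ) :
    BddAbove (range (windowDensity A k)) :=
  ⟨1, forall_mem_range.2 (windowDensity_le_one A k)⟩

lemma isBoundedUnder_le_iSup_windowDensity (A : Set ℕ) :
    IsBoundedUnder (· ≤ ·) atTop (fun k => ⨆ l, windowDensity A k l) :=
  isBoundedUnder_of ⟨1, fun k => ciSup_le (windowDensity_le_one A k)⟩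

lemma isBoundedUnder_ge_iSup_windowDensity (A : Set ℕ) :
    IsBoundedUnder (· ≥ ·) atTop (fun k => ⨆ l, windowDensity A k l) :=
  isBoundedUnder_of ⟨0, fun k => Real.iSup_nonneg (windowDensity_nonneg A k)⟩

@[simp]
lemma upperBanachDensity_empty : upperBanachDensity ∅ = 0 := by
  simp [upperBanachDensity, windowDensity]

lemma upperBanachDensity_mono (h : A ⊆ B) : upperBanachDensity A ≤ upperBanachDensity B :=
  limsup_le_limsup
    (Eventually.of_forall fun k =>
      ciSup_mono (bddAbove_range_windowDensity B k) (windowDensity_mono h k))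
    (isBoundedUnder_ge_iSup_windowDensity A).isCoboundedUnder_le
    (isBoundedUnder_le_iSup_windowDensity B)

lemma upperBanachDensity_union_le (A B : Set ℕ) :
    upperBanachDensity (A ∪ B) ≤ upperBanachDensity A + upperBanachDensity B := by
  have iSup_union_le (k : ℕ) : ⨆ l, windowDensity (A ∪ B) k l ≤
      (⨆ l, windowDensity A k l) + ⨆ l, windowDensity B k l :=
    ciSup_le fun l => (windowDensity_union_le A B k l).trans <|
      add_le_add (le_ciSup (bddAbove_range_windowDensity A k) l)
        (le_ciSup (bddAbove_range_windowDensity B k) l)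
  have bounded_A := isBoundedUnder_le_iSup_windowDensity A
  have bounded_B := isBoundedUnder_le_iSup_windowDensity B
  calc upperBanachDensity (A ∪ B)
      ≤ limsup ((fun k => ⨆ l, windowDensity A k l) + fun k => ⨆ l, windowDensity B k l) atTop :=
        limsup_le_limsup (Eventually.of_forall iSup_union_le)
          (isBoundedUnder_ge_iSup_windowDensity _).isCoboundedUnder_le
          (isBoundedUnder_le_add bounded_A bounded_B)
    _ ≤ upperBanachDensity A + upperBanachDensity B :=
        limsup_add_le (isBoundedUnder_ge_iSup_windowDensity A) bounded_A
          (isBoundedUnder_ge_iSup_windowDensity B).isCoboundedUnder_le bounded_B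

lemma upperBanachDensity_biUnion_finset_le {ι : Type*} (t : Finset ι) (A : ι → Set ℕ) :
    upperBanachDensity (⋃ p ∈ t, A p) ≤ ∑ p ∈ t, upperBanachDensity (A p) := by
  classical
  induction t using Finset.induction_on with
  | empty => simp
  | insert p t hp ih =>
    rw [Finset.set_biUnion_insert, Finset.sum_insert hp]
    exact (upperBanachDensity_union_le _ _).trans (add_le_add_right ih _)

lemma card_filter_range_mul_card_le [DecidablePred (· ∈ A)] {P : Finset ℕ}
    (hP : (P : Set ℕ).PairwiseDisjoint fun p => (p + ·) '' A) (k l : ℕ) :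
    {i ∈ Finset.range k | i + l ∈ A}.card * P.card ≤ k + P.sup id := by
  set W := {i ∈ Finset.range k | i + l ∈ A} with hW
  have translates_disjoint : (P : Set ℕ).PairwiseDisjoint fun p => W.image (p + ·) := by
    intro p hp q hq hpq
    simp only [Function.onFun, Finset.disjoint_left, Finset.mem_image, hW, Finset.mem_filter]
    rintro _ ⟨i, ⟨-, hi⟩, rfl⟩ ⟨j, ⟨-, hj⟩, hij⟩
    exact disjoint_left.1 (hP hp hq hpq) ⟨i + l, hi, rfl⟩ ⟨j + l, hj, by grind⟩
  have translates_subset : P.biUnion (fun p => W.image (p + ·)) ⊆ Finset.range (k + P.sup id) := by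
    simp only [Finset.biUnion_subset, Finset.image_subset_iff, Finset.mem_range, hW,
      Finset.mem_filter]
    intro p hp i hi
    have : p ≤ P.sup id := Finset.le_sup (f := id) hp
    omega
  calc W.card * P.card
      = ∑ p ∈ P, (W.image (p + ·)).card := by
        simp [Finset.card_image_of_injective W (add_right_injective _), mul_comm]
    _ = (P.biUnion fun p => W.image (p + ·)).card := (Finset.card_biUnion translates_disjoint).symm
    _ ≤ k + P.sup id := (Finset.card_le_card translates_subset).trans_eq (Finset.card_range _)

lemma windowDensity_mul_card_le {P : Finset ℕ}
    (hP : (P : Set ℕ).PairwiseDisjoint fun p => (p + ·) '' A) (k l : ℕ) :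
    windowDensity A k l * P.card ≤ 1 + (P.sup id : ℕ) / k := by
  classical
  rcases k.eq_zero_or_pos with rfl | hk
  · simp [windowDensity]
  have window_eq : windowDensity A k l = {i ∈ Finset.range k | i + l ∈ A}.card / k := by
    simp [windowDensity, indicator_apply]
  have hk' : (0 : ℝ) < k := Nat.cast_pos.2 hk
  rw [window_eq, div_mul_eq_mul_div, one_add_div hk'.ne']
  gcongr
  exact_mod_cast card_filter_range_mul_card_le hP k l

lemma upperBanachDensity_mul_card_le_one {P : Finset ℕ}
    (hP : (P : Set ℕ).PairwiseDisjoint fun p => (p + ·) '' A) :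
    upperBanachDensity A * P.card ≤ 1 := by
  rcases P.eq_empty_or_nonempty with rfl | hne
  · simp
  have card_pos : (0 : ℝ) < P.card := Nat.cast_pos.2 hne.card_pos
  have bound_tendsto : Tendsto (fun k : ℕ => (1 + (P.sup id : ℕ) / (k : ℝ)) / P.card) atTop
      (𝓝 (1 / P.card)) := by
    simpa using ((tendsto_const_div_atTop_nhds_zero_nat ((P.sup id : ℕ) : ℝ)).const_add 1).div_const
      (P.card : ℝ)
  rw [← le_div_iff₀ card_pos, ← bound_tendsto.limsup_eq]
  exact limsup_le_limsup
    (Eventually.of_forall fun k => ciSup_le fun l =>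
      (le_div_iff₀ card_pos).2 (windowDensity_mul_card_le hP k l))
    (isBoundedUnder_ge_iSup_windowDensity A).isCoboundedUnder_le
    bound_tendsto.isBoundedUnder_le

theorem exists_finset_forall_exists_add_eq_add (hA : 0 < upperBanachDensity A) :
    ∃ P : Finset ℕ, ∀ n, ∃ p ∈ P, ∃ a ∈ A, ∃ b ∈ A, n + a = p + b := by
  classical
  let disjointTranslates : Set (Finset ℕ) :=
    {P | (P : Set ℕ).PairwiseDisjoint fun p => (p + ·) '' A}
  have card_finite : (Finset.card '' disjointTranslates).Finite := by
    refine (finite_Iic ⌊1 / upperBanachDensity A⌋₊).subset ?_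
    rintro _ ⟨P, hP, rfl⟩
    exact Nat.le_floor ((le_div_iff₀' hA).2 (upperBanachDensity_mul_card_le_one hP))
  have empty_mem : ∅ ∈ disjointTranslates := by simp [disjointTranslates]
  obtain ⟨P, hP, hmax⟩ := card_finite.exists_maximalFor' _ _ ⟨∅, empty_mem⟩
  refine ⟨P, fun n => ?_⟩
  by_contra! hn
  have hnP : n ∉ P := by
    intro hnP
    obtain ⟨a, ha⟩ : A.Nonempty := by
      rw [nonempty_iff_ne_empty]
      rintro rfl
      simp at hA
    exact hn n hnP a ha a ha rfl
  have insert_mem : insert n P ∈ disjointTranslates := by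
    simp only [disjointTranslates, mem_ofPred_eq, Finset.coe_insert]
    refine hP.insert fun p hp _ => disjoint_left.2 ?_
    rintro _ ⟨a, ha, rfl⟩ ⟨b, hb, hab⟩
    exact hn p hp a ha b hb hab.symm
  have := hmax insert_mem (Finset.card_le_card (Finset.subset_insert n P))
  rw [Finset.card_insert_of_notMem hnP] at this
  omega

end Density

section TotallyBounded

variable {X : Type*} [PseudoMetricSpace X]

lemma exists_forall_exists_le_dist_lt_of_totallyBounded_range {u : ℕ → X}
    (hu : TotallyBounded (range u)) {ε : ℝ} (hε : 0 < ε) :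
    ∃ N, ∀ k, ∃ i ≤ N, dist (u k) (u i) < ε := by
  obtain ⟨t, htu, htfin, hcover⟩ := Metric.finite_approx_of_totallyBounded hu ε hε
  choose! index hindex using fun y (hy : y ∈ t) => htu hy
  obtain ⟨N, hN⟩ := (htfin.image index).bddAbove
  refine ⟨N, fun k => ?_⟩
  obtain ⟨y, hy, hky⟩ := mem_iUnion₂.1 (hcover (mem_range_self k))
  exact ⟨index y, hN (mem_image_of_mem index hy), by rwa [hindex y hy]⟩

lemma isometry_iterate {φ : X → X} (hφ : Isometry φ) (n : ℕ) : Isometry φ^[n] := by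
  induction n with
  | zero => exact isometry_id
  | succ n ih => exact ih.comp hφ

lemma dist_iterate_le_dist {f : X → X} (hf : LipschitzWith 1 f) (n : ℕ) (x y : X) :
    dist (f^[n] x) (f^[n] y) ≤ dist x y := by
  simpa using (hf.iterate n).dist_le_mul x y

lemma dist_iterate_iterate_le {f : X → X} (hf : LipschitzWith 1 f) {x : X} {D : ℝ}
    (hD : ∀ c, dist x (f^[c] x) ≤ D) (k j : ℕ) : dist (f^[k] x) (f^[j] x) ≤ D := by
  wlog hkj : k ≤ j generalizing k j
  · rw [dist_comm]
    exact this j k (le_of_not_ge hkj)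
  obtain ⟨c, rfl⟩ := Nat.exists_eq_add_of_le hkj
  rw [Function.iterate_add_apply]
  exact (dist_iterate_le_dist hf k x _).trans (hD c)

theorem totallyBounded_range_iterate_of_upperBanachDensity_pos {φ : X → X} (hφ : Isometry φ)
    {K : Set X} (hK : TotallyBounded K) {x : X}
    (hx : 0 < upperBanachDensity {n | φ^[n] x ∈ K}) :
    TotallyBounded (range fun n => φ^[n] x) := by
  refine Metric.totallyBounded_iff.2 fun ε hε => ?_
  obtain ⟨t, htfin, hcover⟩ := Metric.totallyBounded_iff.1 hK (ε / 2) (half_pos hε)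
  lift t to Finset X using htfin
  obtain ⟨p, -, hp⟩ : ∃ p ∈ t, 0 < upperBanachDensity {n | φ^[n] x ∈ Metric.ball p (ε / 2)} := by
    refine Finset.exists_lt_of_sum_lt (f := fun _ => (0 : ℝ)) ?_
    rw [Finset.sum_const_zero]
    refine hx.trans_le ((upperBanachDensity_mono fun n hn => ?_).trans
      (upperBanachDensity_biUnion_finset_le t _))
    simpa using hcover hn
  obtain ⟨P, hP⟩ := exists_finset_forall_exists_add_eq_add hp
  refine ⟨(fun q => φ^[q] x) '' P, P.finite_toSet.image _, range_subset_iff.2 fun n => ?_⟩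
  obtain ⟨q, hq, a, ha, b, hb, hab⟩ := hP n
  refine mem_biUnion (mem_image_of_mem _ hq) ?_
  calc dist (φ^[n] x) (φ^[q] x)
      = dist (φ^[a] (φ^[n] x)) (φ^[a] (φ^[q] x)) := ((isometry_iterate hφ a).dist_eq _ _).symm
    _ = dist (φ^[q] (φ^[b] x)) (φ^[q] (φ^[a] x)) := by
        simp only [← Function.iterate_add_apply, add_comm a, hab]
    _ = dist (φ^[b] x) (φ^[a] x) := (isometry_iterate hφ q).dist_eq _ _
    _ ≤ dist (φ^[b] x) p + dist (φ^[a] x) p := dist_triangle_right _ _ _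
    _ < ε / 2 + ε / 2 := add_lt_add hb ha
    _ = ε := add_halves ε

end TotallyBounded

section Bicombing

variable {X : Type*} [MetricSpace X] {σ : X → X → ℝ → X} {φ : X → X}

lemma IsConicalBicombing.apply_self (hσ : IsConicalBicombing σ) (x : X) {t : ℝ}
    (ht : t ∈ Icc (0 : ℝ) 1) : σ x x t = x := by
  have h := hσ.2.2.1 x x t ht 0 (left_mem_Icc.2 zero_le_one)
  rwa [dist_self, mul_zero, hσ.1, dist_eq_zero] at h

lemma IsConicalBicombing.dist_le (hσ : IsConicalBicombing σ) (w x y : X) {t : ℝ}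
    (ht : t ∈ Icc (0 : ℝ) 1) : dist w (σ x y t) ≤ (1 - t) * dist w x + t * dist w y := by
  simpa only [hσ.apply_self w ht] using hσ.2.2.2 w x w y t ht

lemma one_half_mem_Icc : (1 / 2 : ℝ) ∈ Icc (0 : ℝ) 1 := by norm_num

/-- The map sending `x` to the `σ`-midpoint of `x` and `φ x`. Its iterates at `x` are nested
midpoints of the orbit of `x` under `φ`. -/
noncomputable def averagingMap (σ : X → X → ℝ → X) (φ : X → X) (x : X) : X :=
  σ x (φ x) (1 / 2)

lemma commute_averagingMap (hequiv : SigmaEquivariant σ φ) :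
    Function.Commute (averagingMap σ φ) φ :=
  fun x => (hequiv x (φ x) (1 / 2) one_half_mem_Icc).symm

lemma lipschitzWith_averagingMap (hσ : IsConicalBicombing σ) (hφ : LipschitzWith 1 φ) :
    LipschitzWith 1 (averagingMap σ φ) := by
  refine LipschitzWith.of_dist_le_mul fun x y => ?_
  have hconical := hσ.2.2.2 x y (φ x) (φ y) (1 / 2) one_half_mem_Icc
  have hφxy := hφ.dist_le_mul x y
  rw [NNReal.coe_one, one_mul] at hφxy ⊢
  unfold averagingMap
  linarith

lemma averagingMap_iterate_succ (hequiv : SigmaEquivariant σ φ) (n : ℕ) (x : X) :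
    (averagingMap σ φ)^[n + 1] x =
      σ ((averagingMap σ φ)^[n] x) ((averagingMap σ φ)^[n] (φ x)) (1 / 2) := by
  rw [Function.iterate_succ_apply', (commute_averagingMap hequiv).iterate_left n x, averagingMap]

lemma averagingMap_iterate_mem_convSigmaSets (hequiv : SigmaEquivariant σ φ) (x : X) (n k : ℕ) :
    (averagingMap σ φ)^[n] (φ^[k] x) ∈ convSigmaSets σ (range fun k => φ^[k] x) n := by
  induction n generalizing k with
  | zero => exact mem_range_self k
  | succ n ih =>
    rw [averagingMap_iterate_succ hequiv, ← Function.iterate_succ_apply' φ k x]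
    exact ⟨_, ih k, _, ih (k + 1), 1 / 2, one_half_mem_Icc, rfl⟩

lemma averagingMap_iterate_mem_convSigma (hequiv : SigmaEquivariant σ φ) (x : X) (n : ℕ) :
    (averagingMap σ φ)^[n] x ∈ convSigma σ (range fun k => φ^[k] x) :=
  mem_iUnion.2 ⟨n, averagingMap_iterate_mem_convSigmaSets hequiv x n 0⟩

lemma dist_averagingMap_iterate_succ_le (hσ : IsConicalBicombing σ)
    (hequiv : SigmaEquivariant σ φ) (w z : X) (n : ℕ) :
    dist w ((averagingMap σ φ)^[n + 1] z) ≤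
      (dist w ((averagingMap σ φ)^[n] z) + dist w ((averagingMap σ φ)^[n] (φ z))) / 2 := by
  rw [averagingMap_iterate_succ hequiv]
  linarith [hσ.dist_le w ((averagingMap σ φ)^[n] z) ((averagingMap σ φ)^[n] (φ z)) one_half_mem_Icc]

lemma dist_averagingMap_iterate_le (hσ : IsConicalBicombing σ) (hequiv : SigmaEquivariant σ φ)
    {w z : X} {D : ℝ} (hD : ∀ k, dist w (φ^[k] z) ≤ D) (n : ℕ) :
    dist w ((averagingMap σ φ)^[n] z) ≤ D := by
  induction n generalizing z with
  | zero => exact hD 0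
  | succ n ih =>
    linarith [dist_averagingMap_iterate_succ_le hσ hequiv w z n, ih hD, ih fun k => hD (k + 1)]

lemma dist_averagingMap_iterate_le_of_le (hσ : IsConicalBicombing σ)
    (hequiv : SigmaEquivariant σ φ) {w z : X} {D : ℝ} (hD : ∀ k, dist w (φ^[k] z) ≤ D)
    {i n : ℕ} (hi : i ≤ n) :
    dist w ((averagingMap σ φ)^[n] z) ≤
      (1 - (1 / 2) ^ n) * D + (1 / 2) ^ n * dist w (φ^[i] z) := by
  induction n generalizing z i with
  | zero => simp [Nat.le_zero.1 hi]
  | succ n ih =>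
    have hD' (k : ℕ) : dist w (φ^[k] (φ z)) ≤ D := hD (k + 1)
    have step := dist_averagingMap_iterate_succ_le hσ hequiv w z n
    rw [pow_succ]
    rcases hi.lt_or_eq with hlt | rfl
    · linarith [ih hD (Nat.lt_succ_iff.1 hlt), dist_averagingMap_iterate_le hσ hequiv hD' n]
    · rw [Function.iterate_succ_apply φ]
      linarith [ih hD' le_rfl, dist_averagingMap_iterate_le hσ hequiv hD n]

lemma dist_iterate_averagingMap_iterate_le_of_dense (hσ : IsConicalBicombing σ)
    (hφ : LipschitzWith 1 φ) (hequiv : SigmaEquivariant σ φ) {z : X} {D ε : ℝ} {N : ℕ}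
    (hD : ∀ c, dist z (φ^[c] z) ≤ D) (hN : ∀ k, ∃ i ≤ N, dist (φ^[k] z) (φ^[i] z) ≤ ε) (c : ℕ) :
    dist ((averagingMap σ φ)^[N] z) (φ^[c] ((averagingMap σ φ)^[N] z)) ≤
      (1 - (1 / 2) ^ N) * D + (1 / 2) ^ N * ε := by
  have dist_average_le (k : ℕ) : dist (φ^[k] z) ((averagingMap σ φ)^[N] z) ≤
      (1 - (1 / 2) ^ N) * D + (1 / 2) ^ N * ε := by
    obtain ⟨i, hi, hki⟩ := hN k
    have hDk := dist_iterate_iterate_le hφ hD k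
    refine (dist_averagingMap_iterate_le_of_le hσ hequiv hDk hi).trans ?_
    gcongr
  rw [← (commute_averagingMap hequiv).iterate_iterate N c z]
  refine dist_averagingMap_iterate_le hσ hequiv (fun k => ?_) N
  rw [← Function.iterate_add_apply, dist_comm]
  exact dist_average_le (k + c)

lemma dist_iterate_averagingMap_iterate_mul_le (hσ : IsConicalBicombing σ)
    (hφ : LipschitzWith 1 φ) (hequiv : SigmaEquivariant σ φ) {x : X} {D ε : ℝ} {N : ℕ}
    (hD : ∀ c, dist x (φ^[c] x) ≤ D) (hN : ∀ k, ∃ i ≤ N, dist (φ^[k] x) (φ^[i] x) ≤ ε)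
    (m c : ℕ) :
    dist ((averagingMap σ φ)^[N * m] x) (φ^[c] ((averagingMap σ φ)^[N * m] x)) ≤
      ε + (1 - (1 / 2) ^ N) ^ m * D := by
  induction m generalizing c with
  | zero =>
    obtain ⟨_, -, hε⟩ := hN 0
    simpa using (hD c).trans (le_add_of_nonneg_left (dist_nonneg.trans hε))
  | succ m ih =>
    have dense_orbit (k : ℕ) : ∃ i ≤ N, dist (φ^[k] ((averagingMap σ φ)^[N * m] x))
        (φ^[i] ((averagingMap σ φ)^[N * m] x)) ≤ ε := by
      obtain ⟨i, hi, hki⟩ := hN k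
      refine ⟨i, hi, le_trans ?_ hki⟩
      simp only [← (commute_averagingMap hequiv).iterate_iterate _ _ x]
      exact dist_iterate_le_dist (lipschitzWith_averagingMap hσ hφ) _ _ _
    rw [Nat.mul_succ, add_comm, Function.iterate_add_apply]
    refine (dist_iterate_averagingMap_iterate_le_of_dense hσ hφ hequiv ih dense_orbit c).trans_eq ?_
    ring

lemma eventually_dist_iterate_averagingMap_iterate_lt (hσ : IsConicalBicombing σ)
    (hφ : LipschitzWith 1 φ) (hequiv : SigmaEquivariant σ φ) {x : X}
    (hx : TotallyBounded (range fun k => φ^[k] x)) {ε : ℝ} (hε : 0 < ε) :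
    ∀ᶠ n in atTop, ∀ c,
      dist ((averagingMap σ φ)^[n] x) (φ^[c] ((averagingMap σ φ)^[n] x)) < ε := by
  obtain ⟨D, hD⟩ := Metric.isBounded_iff.1 hx.isBounded
  obtain ⟨N, hN⟩ := exists_forall_exists_le_dist_lt_of_totallyBounded_range hx (half_pos hε)
  have bound_tendsto : Tendsto (fun m : ℕ => ε / 2 + (1 - (1 / 2 : ℝ) ^ N) ^ m * D) atTop
      (𝓝 (ε / 2)) := by
    have ratio_nonneg : 0 ≤ 1 - (1 / 2 : ℝ) ^ N :=
      sub_nonneg.2 (pow_le_one₀ (by norm_num) (by norm_num))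
    have ratio_lt_one : 1 - (1 / 2 : ℝ) ^ N < 1 := sub_lt_self 1 (by positivity)
    simpa using
      ((tendsto_pow_atTop_nhds_zero_of_lt_one ratio_nonneg ratio_lt_one).mul_const D).const_add _
  obtain ⟨m, hm⟩ := (bound_tendsto.eventually_lt_const (half_lt_self hε)).exists
  filter_upwards [eventually_ge_atTop (N * m)] with n hn c
  obtain ⟨j, rfl⟩ := Nat.exists_eq_add_of_le' hn
  rw [Function.iterate_add_apply, ← (commute_averagingMap hequiv).iterate_iterate j c]
  calc _ ≤ _ := dist_iterate_le_dist (lipschitzWith_averagingMap hσ hφ) j _ _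
    _ ≤ ε / 2 + (1 - (1 / 2) ^ N) ^ m * D :=
        dist_iterate_averagingMap_iterate_mul_le hσ hφ hequiv
          (fun c => hD (mem_range_self 0) (mem_range_self c))
          (fun k => (hN k).imp fun _ => And.imp_right le_of_lt) m c
    _ < ε := hm

lemma cauchySeq_averagingMap_iterate (hσ : IsConicalBicombing σ) (hφ : LipschitzWith 1 φ)
    (hequiv : SigmaEquivariant σ φ) {x : X}
    (hx : TotallyBounded (range fun k => φ^[k] x)) :
    CauchySeq fun n => (averagingMap σ φ)^[n] x := by
  refine Metric.cauchySeq_iff'.2 fun ε hε => ?_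
  obtain ⟨n, hn⟩ :=
    (eventually_dist_iterate_averagingMap_iterate_lt hσ hφ hequiv hx (half_pos hε)).exists
  refine ⟨n, fun m hm => ?_⟩
  obtain ⟨j, rfl⟩ := Nat.exists_eq_add_of_le' hm
  rw [dist_comm, Function.iterate_add_apply]
  exact (dist_averagingMap_iterate_le hσ hequiv (fun c => (hn c).le) j).trans_lt (half_lt_self hε)

theorem exists_fixed_point_of_totallyBounded_orbit [CompleteSpace X] (hσ : IsConicalBicombing σ)
    (hφ : LipschitzWith 1 φ) (hequiv : SigmaEquivariant σ φ) {x : X}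
    (hx : TotallyBounded (range fun k => φ^[k] x)) :
    ∃ z ∈ closure (convSigma σ (range fun k => φ^[k] x)), φ z = z := by
  obtain ⟨z, hz⟩ :=
    cauchySeq_tendsto_of_complete (cauchySeq_averagingMap_iterate hσ hφ hequiv hx)
  refine ⟨z, mem_closure_of_tendsto hz
    (Eventually.of_forall (averagingMap_iterate_mem_convSigma hequiv x)), ?_⟩
  have displacement_tendsto : Tendsto
      (fun n => dist ((averagingMap σ φ)^[n] x) (φ ((averagingMap σ φ)^[n] x))) atTop (𝓝 0) := by
    refine Metric.tendsto_nhds.2 fun ε hε => ?_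
    filter_upwards [eventually_dist_iterate_averagingMap_iterate_lt hσ hφ hequiv hx hε] with n hn
    simpa using hn 1
  exact tendsto_nhds_unique ((hφ.continuous.tendsto z).comp hz)
    ((tendsto_iff_of_dist displacement_tendsto).1 hz)

theorem fixed_point_of_single_isometry_with_recurrent_orbit_general [CompleteSpace X]
    (hσ : IsConicalBicombing σ) (hiso : Isometry φ) (hequiv : SigmaEquivariant σ φ)
    {K : Set X} (hK : TotallyBounded K) {x₀ : X}
    (hrec : 0 < upperBanachDensity {n | φ^[n] x₀ ∈ K}) :
    ∃ xs ∈ closure (convSigma σ (range fun k => φ^[k] x₀)), φ xs = xs :=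
  exists_fixed_point_of_totallyBounded_orbit hσ hiso.lipschitz hequiv
    (totallyBounded_range_iterate_of_upperBanachDensity_pos hiso hK hrec)

end Bicombing

theorem fixed_point_of_single_isometry_with_recurrent_orbit
    {X : Type*} [MetricSpace X] [CompleteSpace X]
    (σ : X → X → ℝ → X) (hσ : IsConicalBicombing σ) (hmid : MidpointProp σ)
    (φ : X → X) (hiso : Isometry φ) (hsurj : Function.Surjective φ)
    (hequiv : SigmaEquivariant σ φ)
    (x₀ : X) (K : Set X) (hK : IsCompact K)
    (hrec : 0 < Filter.atTop.limsup (fun k : ℕ =>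
      ⨆ l : ℕ, (∑ i ∈ Finset.range k,
        K.indicator (fun _ => (1:ℝ)) (φ^[i + l] x₀)) / k)) :
    ∃ xs ∈ closure (convSigma σ (Set.range fun k : ℕ => φ^[k] x₀)), φ xs = xs :=
  fixed_point_of_single_isometry_with_recurrent_orbit_general hσ hiso hequiv hK.totallyBounded hrec
end

section
/- Let C denote the closure of the convex hull of A := {T^k(x₀) : k ∈ ℤ} in (ℓ¹(ℤ), ‖·‖_⋆). Then C is a bounded, closed, convex (hence complete) subset with 1 ≤ ‖x‖_⋆ ≤ √2 for all x ∈ C, the shift map T satisfies T(C) = C and is an isometry of (C, ‖·‖_⋆), and T has no fixed point in C, i.e. T(x) ≠ x for every x ∈ C. -/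
/-- The norm `‖x‖_⋆ = sqrt((Σ|x_k|)² + Σ|x_k|²)` on `ℓ¹(ℤ)`. -/
noncomputable def starNorm (x : lp (fun _ : ℤ => ℝ) 1) : ℝ :=
  Real.sqrt ((∑' k : ℤ, |x k|) ^ 2 + ∑' k : ℤ, |x k| ^ 2)

/-- The `n`-th power of the shift map `T` on `ℓ¹(ℤ)`: `(T^n x)_k = x_{k-n}`. -/
noncomputable def shiftPow (n : ℤ) (x : lp (fun _ : ℤ => ℝ) 1) : lp (fun _ : ℤ => ℝ) 1 :=
  ⟨fun k => x (k - n), by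
    apply memℓp_gen
    have h : Summable fun k : ℤ => ‖x k‖ ^ (1 : ENNReal).toReal :=
      (lp.memℓp x).summable (by norm_num)
    exact ((Equiv.subRight n).summable_iff
      (f := fun k : ℤ => ‖x k‖ ^ (1 : ENNReal).toReal)).mpr h⟩

/-- The sequence with entry `1` at index `0` and `0` elsewhere. -/
noncomputable def xZero : lp (fun _ : ℤ => ℝ) 1 := lp.single 1 (0:ℤ) (1:ℝ)

/-!
The shift `T` is a linear isometry of `ℓ¹(ℤ)` permuting its own orbit `{T^n x₀}`, hence it preserves
the closed convex hull `C` of that orbit. The nonnegative sequences of total mass `1` form a closed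
convex set containing the orbit, so every `x ∈ C` has `‖x‖₁ = 1`, and the estimate
`‖x‖₁ ≤ ‖x‖_⋆ ≤ √2 ‖x‖₁` gives the bounds on `C`. By the same estimate boundedness, closure and
completeness mean the same for either norm. Finally, a fixed point of `T` is a constant sequence
tending to `0`, hence it vanishes and does not lie in `C`.
-/

open Filter Topology

section General

theorem image_closure_convexHull {𝕜 E F : Type*} [Semiring 𝕜] [PartialOrder 𝕜]
    [AddCommGroup E] [Module 𝕜 E] [TopologicalSpace E]
    [AddCommGroup F] [Module 𝕜 F] [TopologicalSpace F] (e : E ≃L[𝕜] F) (s : Set E) :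
    e '' closure (convexHull 𝕜 s) = closure (convexHull 𝕜 (e '' s)) := by
  rw [e.image_closure]
  exact congrArg closure (e.toLinearEquiv.toLinearMap.image_convexHull s)

theorem eq_zero_of_periodic_of_tendsto_cofinite {G X : Type*} [AddGroup G] [Zero X]
    [TopologicalSpace X] [T1Space X] {f : G → X} {c : G} (hc : ¬IsOfFinAddOrder c)
    (hf : Function.Periodic f c) (hlim : Tendsto f cofinite (𝓝 0)) : f = 0 := by
  funext g
  have translates_injective : Function.Injective fun m : ℤ => g + m • c :=
    (add_right_injective g).comp (injective_zsmul_iff_not_isOfFinAddOrder.mpr hc)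
  have along_translates : Tendsto (fun m : ℤ => f (g + m • c)) cofinite (𝓝 0) :=
    hlim.comp translates_injective.tendsto_cofinite
  simp only [hf.zsmul _ g] at along_translates
  exact tendsto_const_nhds_iff.mp along_translates

theorem tsum_sq_le_sq_tsum_of_nonneg {ι : Type*} {f : ι → ℝ} (hf : ∀ i, 0 ≤ f i)
    (hs : Summable f) : ∑' i, f i ^ 2 ≤ (∑' i, f i) ^ 2 := by
  refine Real.tsum_le_of_sum_le (fun i => sq_nonneg (f i)) fun s => ?_
  calc ∑ i ∈ s, f i ^ 2 ≤ (∑ i ∈ s, f i) ^ 2 :=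
        Finset.sum_sq_le_sq_sum_of_nonneg fun i _ => hf i
    _ ≤ (∑' i, f i) ^ 2 :=
        pow_le_pow_left₀ (Finset.sum_nonneg fun i _ => hf i)
          (hs.sum_le_tsum s fun i _ => hf i) 2

theorem hasSum_norm_lp_one {ι : Type*} {E : ι → Type*} [∀ i, NormedAddCommGroup (E i)]
    (x : lp E 1) : HasSum (fun i => ‖x i‖) ‖x‖ := by
  simpa using lp.hasSum_norm (p := 1) (by simp) x

end General

section Simplex

variable {ι : Type*}

/-- The infinite-dimensional standard simplex: nonnegative elements of `ℓ¹(ι)` of total mass `1`.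
It plays the role of `stdSimplex`, which is available only for finite index types. -/
def lpOneSimplex (ι : Type*) : Set (lp (fun _ : ι => ℝ) 1) :=
  {x | (∀ i, 0 ≤ x i) ∧ ∑' i, x i = 1}

theorem lpOneSimplex_eq_iInter_inter :
    lpOneSimplex ι = (⋂ i, lp.evalCLM ℝ (fun _ : ι => ℝ) 1 i ⁻¹' Set.Ici 0) ∩
      lp.tsumCLM ℝ ι ℝ ⁻¹' {1} := by
  ext x
  simp [lpOneSimplex, lp.evalCLM]

theorem convex_lpOneSimplex : Convex ℝ (lpOneSimplex ι) := by
  rw [lpOneSimplex_eq_iInter_inter]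
  exact (convex_iInter fun i =>
      (convex_Ici 0).linear_preimage (lp.evalCLM ℝ _ 1 i).toLinearMap).inter
    ((convex_singleton 1).linear_preimage (lp.tsumCLM ℝ ι ℝ).toLinearMap)

theorem isClosed_lpOneSimplex : IsClosed (lpOneSimplex ι) := by
  rw [lpOneSimplex_eq_iInter_inter]
  exact (isClosed_iInter fun i => isClosed_Ici.preimage (lp.evalCLM ℝ _ 1 i).continuous).inter
    (isClosed_singleton.preimage (lp.tsumCLM ℝ ι ℝ).continuous)

theorem norm_eq_one_of_mem_lpOneSimplex {x : lp (fun _ : ι => ℝ) 1} (hx : x ∈ lpOneSimplex ι) :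
    ‖x‖ = 1 := by
  obtain ⟨nonneg, mass⟩ := hx
  rw [← (hasSum_norm_lp_one x).tsum_eq, ← mass]
  exact tsum_congr fun i => Real.norm_of_nonneg (nonneg i)

theorem single_one_mem_lpOneSimplex [DecidableEq ι] (i : ι) :
    lp.single 1 i (1 : ℝ) ∈ lpOneSimplex ι := by
  rw [lpOneSimplex, Set.mem_ofPred_eq, lp.coeFn_single]
  exact ⟨fun j => (Pi.single_nonneg.mpr zero_le_one : (0 : ι → ℝ) ≤ _) j, tsum_pi_single i 1⟩

end Simplex

section Shift

theorem shiftPow_apply (n : ℤ) (x : lp (fun _ : ℤ => ℝ) 1) (k : ℤ) :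
    shiftPow n x k = x (k - n) :=
  rfl

theorem shiftPow_zero (x : lp (fun _ : ℤ => ℝ) 1) : shiftPow 0 x = x := by
  ext k
  rw [shiftPow_apply, sub_zero]

theorem shiftPow_shiftPow (m n : ℤ) (x : lp (fun _ : ℤ => ℝ) 1) :
    shiftPow m (shiftPow n x) = shiftPow (m + n) x := by
  ext k
  rw [shiftPow_apply, shiftPow_apply, shiftPow_apply, sub_sub]

theorem shiftPow_sub (n : ℤ) (x y : lp (fun _ : ℤ => ℝ) 1) :
    shiftPow n (x - y) = shiftPow n x - shiftPow n y :=
  rfl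

theorem shiftPow_xZero (n : ℤ) : shiftPow n xZero = lp.single 1 n (1 : ℝ) := by
  ext k
  simp only [shiftPow_apply, xZero, lp.single_apply, Pi.single_apply, sub_eq_zero]

theorem tsum_shiftPow {X : Type*} [AddCommMonoid X] [TopologicalSpace X] (n : ℤ)
    (x : lp (fun _ : ℤ => ℝ) 1) (f : ℝ → X) : ∑' k, f (shiftPow n x k) = ∑' k, f (x k) :=
  (Equiv.subRight n).tsum_eq fun k => f (x k)

theorem norm_shiftPow (n : ℤ) (x : lp (fun _ : ℤ => ℝ) 1) : ‖shiftPow n x‖ = ‖x‖ := by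
  rw [← (hasSum_norm_lp_one _).tsum_eq, ← (hasSum_norm_lp_one x).tsum_eq]
  exact tsum_shiftPow n x norm

theorem starNorm_shiftPow (n : ℤ) (x : lp (fun _ : ℤ => ℝ) 1) :
    starNorm (shiftPow n x) = starNorm x := by
  rw [starNorm, starNorm, tsum_shiftPow n x abs, tsum_shiftPow n x (|·| ^ 2)]

/-- The `n`-th power of the shift as a linear isometric automorphism of `ℓ¹(ℤ)`, with inverse the
`(-n)`-th power. -/
noncomputable def shiftPowIsometryEquiv (n : ℤ) :
    lp (fun _ : ℤ => ℝ) 1 ≃ₗᵢ[ℝ] lp (fun _ : ℤ => ℝ) 1 where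
  toFun := shiftPow n
  invFun := shiftPow (-n)
  map_add' _ _ := rfl
  map_smul' _ _ := rfl
  left_inv x := by rw [shiftPow_shiftPow, neg_add_cancel, shiftPow_zero]
  right_inv x := by rw [shiftPow_shiftPow, add_neg_cancel, shiftPow_zero]
  norm_map' := norm_shiftPow n

theorem shiftPow_image_orbit (m : ℤ) (x : lp (fun _ : ℤ => ℝ) 1) :
    shiftPow m '' Set.range (fun n => shiftPow n x) = Set.range fun n => shiftPow n x := by
  rw [← Set.range_comp, ← (Equiv.addLeft m).surjective.range_comp fun n => shiftPow n x]
  exact congrArg Set.range (funext fun n => shiftPow_shiftPow m n x)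

theorem shiftPow_image_closure_convexHull_orbit (m : ℤ) (x : lp (fun _ : ℤ => ℝ) 1) :
    shiftPow m '' closure (convexHull ℝ (Set.range fun n => shiftPow n x)) =
      closure (convexHull ℝ (Set.range fun n => shiftPow n x)) := by
  conv_rhs => rw [← shiftPow_image_orbit m x]
  exact image_closure_convexHull (shiftPowIsometryEquiv m).toContinuousLinearEquiv _

theorem eq_zero_of_shiftPow_eq_self {n : ℤ} (hn : n ≠ 0) {x : lp (fun _ : ℤ => ℝ) 1}
    (hx : shiftPow n x = x) : x = 0 := by
  have periodic : Function.Periodic x n := fun k => by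
    rw [← congrArg (fun y : lp (fun _ : ℤ => ℝ) 1 => y (k + n)) hx, shiftPow_apply,
      add_sub_cancel_right]
  have tendsto_zero : Tendsto x cofinite (𝓝 0) :=
    tendsto_zero_iff_norm_tendsto_zero.mpr (hasSum_norm_lp_one x).summable.tendsto_cofinite_zero
  exact lp.eq_zero_iff_coeFn_eq_zero.mpr <| eq_zero_of_periodic_of_tendsto_cofinite
    (not_isOfFinAddOrder_of_isAddTorsionFree hn) periodic tendsto_zero

end Shift

section StarNorm

theorem starNorm_eq_sqrt_norm_sq_add (x : lp (fun _ : ℤ => ℝ) 1) :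
    starNorm x = √(‖x‖ ^ 2 + ∑' k, |x k| ^ 2) := by
  rw [← (hasSum_norm_lp_one x).tsum_eq]
  rfl

theorem norm_le_starNorm (x : lp (fun _ : ℤ => ℝ) 1) : ‖x‖ ≤ starNorm x := by
  rw [starNorm_eq_sqrt_norm_sq_add]
  exact Real.le_sqrt_of_sq_le (le_add_of_nonneg_right (tsum_nonneg fun k => sq_nonneg |x k|))

theorem starNorm_le_sqrt_two_mul_norm (x : lp (fun _ : ℤ => ℝ) 1) :
    starNorm x ≤ √2 * ‖x‖ := by
  have hasSum_abs : HasSum (fun k => |x k|) ‖x‖ := hasSum_norm_lp_one x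
  have tsum_sq_le : ∑' k, |x k| ^ 2 ≤ ‖x‖ ^ 2 := by
    rw [← hasSum_abs.tsum_eq]
    exact tsum_sq_le_sq_tsum_of_nonneg (fun k => abs_nonneg (x k)) hasSum_abs.summable
  calc starNorm x = √(‖x‖ ^ 2 + ∑' k, |x k| ^ 2) := starNorm_eq_sqrt_norm_sq_add x
    _ ≤ √(2 * ‖x‖ ^ 2) := Real.sqrt_le_sqrt (by linarith)
    _ = √2 * ‖x‖ := by rw [Real.sqrt_mul zero_le_two, Real.sqrt_sq (norm_nonneg x)]

end StarNorm

theorem closure_convexHull_orbit_xZero_subset_lpOneSimplex :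
    closure (convexHull ℝ (Set.range fun n : ℤ => shiftPow n xZero)) ⊆ lpOneSimplex ℤ := by
  refine closure_minimal (convexHull_min ?_ convex_lpOneSimplex) isClosed_lpOneSimplex
  rintro _ ⟨n, rfl⟩
  simpa only [shiftPow_xZero] using single_one_mem_lpOneSimplex n

theorem busemann_counterexample_properties :
    Bornology.IsBounded (closure (convexHull ℝ (Set.range fun n : ℤ => shiftPow n xZero))) ∧
    IsClosed (closure (convexHull ℝ (Set.range fun n : ℤ => shiftPow n xZero))) ∧
    Convex ℝ (closure (convexHull ℝ (Set.range fun n : ℤ => shiftPow n xZero))) ∧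
    IsComplete (closure (convexHull ℝ (Set.range fun n : ℤ => shiftPow n xZero))) ∧
    (∀ x ∈ closure (convexHull ℝ (Set.range fun n : ℤ => shiftPow n xZero)),
      1 ≤ starNorm x ∧ starNorm x ≤ Real.sqrt 2) ∧
    shiftPow 1 '' closure (convexHull ℝ (Set.range fun n : ℤ => shiftPow n xZero)) =
      closure (convexHull ℝ (Set.range fun n : ℤ => shiftPow n xZero)) ∧
    (∀ x ∈ closure (convexHull ℝ (Set.range fun n : ℤ => shiftPow n xZero)),
      ∀ y ∈ closure (convexHull ℝ (Set.range fun n : ℤ => shiftPow n xZero)),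
        starNorm (shiftPow 1 x - shiftPow 1 y) = starNorm (x - y)) ∧
    (∀ x ∈ closure (convexHull ℝ (Set.range fun n : ℤ => shiftPow n xZero)),
      shiftPow 1 x ≠ x) := by
  have norm_eq_one : ∀ x ∈ closure (convexHull ℝ (Set.range fun n : ℤ => shiftPow n xZero)),
      ‖x‖ = 1 := fun _ hx =>
    norm_eq_one_of_mem_lpOneSimplex (closure_convexHull_orbit_xZero_subset_lpOneSimplex hx)
  refine ⟨?bounded, isClosed_closure, (convex_convexHull ℝ _).closure, isClosed_closure.isComplete,
    fun x hx => ⟨?lower, ?upper⟩, shiftPow_image_closure_convexHull_orbit 1 xZero,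
    fun x _ y _ => ?isometry, fun x hx fixed => ?no_fixed_point⟩
  case bounded => exact isBounded_iff_forall_norm_le.mpr ⟨1, fun x hx => (norm_eq_one x hx).le⟩
  case lower => simpa only [norm_eq_one x hx] using norm_le_starNorm x
  case upper => simpa only [norm_eq_one x hx, mul_one] using starNorm_le_sqrt_two_mul_norm x
  case isometry => rw [← shiftPow_sub, starNorm_shiftPow]
  case no_fixed_point =>
    have x_ne_zero : x ≠ 0 := norm_ne_zero_iff.mp (by rw [norm_eq_one x hx]; exact one_ne_zero)
    exact x_ne_zero (eq_zero_of_shiftPow_eq_self one_ne_zero fixed)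
end

section
/- Let Σ be a countable semigroup admitting a Følner sequence (Σ_k)_{k≥1}. Then for every x⋆ ∈ ℓ∞(Σ) there exists a generalized limit Θ⋆ : ℓ∞(Σ) → ℝ such that Θ⋆(x⋆) = limsup_{k→∞} ( sup_{s∈Σ} (1/|Σ_k|) Σ_{h∈Σ_k} x⋆_{hs} ). -/
open Filter BoundedContinuousFunction

/-- `(F k)` is a Følner sequence of the semigroup `S`. -/
def IsFolner {S : Type*} [Semigroup S] [DecidableEq S] (F : ℕ → Finset S) : Prop :=
  (∀ k, (F k).Nonempty) ∧
  ∀ s : S, Tendsto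
    (fun k => ((symmDiff ((F k).image (fun h => s * h)) (F k)).card : ℝ) / (F k).card)
    atTop (nhds 0)

/-- The average `(1/|F|) Σ_{h∈F} x_{h s}`. -/
noncomputable def folnerAvg {S : Type*} [Semigroup S] [TopologicalSpace S]
    (F : Finset S) (x : BoundedContinuousFunction S ℝ) (s : S) : ℝ :=
  (∑ h ∈ F, x (h * s)) / F.card

/-- A generalized limit on `ℓ∞(S)`: a positive, normalized, left translation invariant
linear functional. -/
def IsGenLimit {S : Type*} [Semigroup S] [TopologicalSpace S] [DiscreteTopology S]
    (Θ : BoundedContinuousFunction S ℝ →ₗ[ℝ] ℝ) : Prop :=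
  (∀ x : BoundedContinuousFunction S ℝ, (∀ s, 0 ≤ x s) → 0 ≤ Θ x) ∧
  (Θ (BoundedContinuousFunction.const S (1:ℝ)) = 1) ∧
  ∀ (s₀ : S) (x : BoundedContinuousFunction S ℝ),
    Θ (x.compContinuous ⟨fun s => s₀ * s, continuous_of_discreteTopology⟩) = Θ x

/-!
The map `p x = limsup_i sup_s (1/|F i|) ∑_{h ∈ F i} x (h s)` is sublinear, so Hahn–Banach yields
a linear functional `Θ ≤ p` that agrees with `p` at any prescribed point. Every linear `Θ ≤ p` is a
generalized limit. Positivity and normalization hold because `p x ≤ 0` for `x ≤ 0` and `p c ≤ c` for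
constants `c`. Invariance holds because `p (L x - x) ≤ 0` for every left translation `L` and every
`x`, in particular for `-x`; this is the Følner condition combined with
`|∑_{h ∈ A} y (s₀ h) - ∑_{h ∈ A} y h| ≤ 2 ‖y‖ |s₀ A ∆ A|`. Since `S` need not be cancellative, one
of the two summands `‖y‖ |s₀ A ∆ A|` pays for the points of `A` that `h ↦ s₀ h` identifies.
-/

section HahnBanach

variable {E : Type*} [AddCommGroup E] [Module ℝ E]

theorem apply_zero_of_pos_homogeneous {p : E → ℝ}
    (p_smul : ∀ c : ℝ, 0 < c → ∀ x, p (c • x) = c * p x) : p 0 = 0 := by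
  have h := p_smul 2 two_pos 0
  rw [smul_zero] at h
  linarith

theorem mul_le_apply_smul_of_sublinear {p : E → ℝ}
    (p_smul : ∀ c : ℝ, 0 < c → ∀ x, p (c • x) = c * p x)
    (p_add : ∀ x y, p (x + y) ≤ p x + p y) (c : ℝ) (x : E) :
    c * p x ≤ p (c • x) := by
  have p_zero := apply_zero_of_pos_homogeneous p_smul
  rcases lt_trichotomy c 0 with hneg | rfl | hpos
  · have h := p_add (c • x) (-c • x)
    rw [← add_smul, add_neg_cancel, zero_smul, p_zero, p_smul (-c) (neg_pos.2 hneg)] at h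
    linarith
  · rw [zero_mul, zero_smul, p_zero]
  · exact (p_smul c hpos x).ge

theorem exists_linearMap_le_sublinear_apply_eq {p : E → ℝ}
    (p_smul : ∀ c : ℝ, 0 < c → ∀ x, p (c • x) = c * p x)
    (p_add : ∀ x y, p (x + y) ≤ p x + p y) (x₀ : E) :
    ∃ f : E →ₗ[ℝ] ℝ, (∀ x, f x ≤ p x) ∧ f x₀ = p x₀ := by
  have well_defined (c : ℝ) (hc : c • x₀ = 0) : c • p x₀ = 0 := by
    rcases smul_eq_zero.1 hc with rfl | rfl
    · rw [zero_smul]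
    · rw [apply_zero_of_pos_homogeneous p_smul, smul_zero]
  let f₀ : E →ₗ.[ℝ] ℝ := LinearPMap.mkSpanSingleton' x₀ (p x₀) well_defined
  have f₀_le : ∀ x : f₀.domain, f₀ x ≤ p x := by
    rintro ⟨x, hx⟩
    obtain ⟨c, rfl⟩ := Submodule.mem_span_singleton.1 hx
    rw [LinearPMap.mkSpanSingleton'_apply]
    exact mul_le_apply_smul_of_sublinear p_smul p_add c x₀
  obtain ⟨f, f_eq, f_le⟩ := exists_extension_of_le_sublinear f₀ p p_smul p_add f₀_le
  refine ⟨f, f_le, (f_eq ⟨x₀, Submodule.mem_span_singleton_self x₀⟩).trans ?_⟩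
  exact LinearPMap.mkSpanSingleton'_apply_self x₀ (p x₀) well_defined _

end HahnBanach

section FinsetSums

variable {α β E : Type*} [SeminormedAddCommGroup E] {C : ℝ}

theorem norm_sum_le_mul_card {y : α → E} (hy : ∀ a, ‖y a‖ ≤ C) (A : Finset α) :
    ‖∑ a ∈ A, y a‖ ≤ C * A.card := by
  simpa [mul_comm] using norm_sum_le_of_le A fun a _ => hy a

theorem norm_sum_sub_sum_le_mul_card_symmDiff [DecidableEq α] {y : α → E}
    (hy : ∀ a, ‖y a‖ ≤ C) (A B : Finset α) :
    ‖∑ a ∈ A, y a - ∑ a ∈ B, y a‖ ≤ C * (symmDiff A B).card := by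
  have card_eq : (symmDiff A B).card = (A \ B).card + (B \ A).card :=
    Finset.card_union_of_disjoint disjoint_sdiff_sdiff
  calc ‖∑ a ∈ A, y a - ∑ a ∈ B, y a‖
      = ‖∑ a ∈ A \ B, y a - ∑ a ∈ B \ A, y a‖ := by rw [Finset.sum_sdiff_sub_sum_sdiff]
    _ ≤ ‖∑ a ∈ A \ B, y a‖ + ‖∑ a ∈ B \ A, y a‖ := norm_sub_le _ _
    _ ≤ C * (A \ B).card + C * (B \ A).card :=
        add_le_add (norm_sum_le_mul_card hy _) (norm_sum_le_mul_card hy _)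
    _ = C * (symmDiff A B).card := by rw [card_eq, Nat.cast_add, mul_add]

theorem norm_sum_comp_sub_sum_image_le [DecidableEq β] {y : β → E} (hy : ∀ b, ‖y b‖ ≤ C)
    (f : α → β) (A : Finset α) :
    ‖∑ a ∈ A, y (f a) - ∑ b ∈ A.image f, y b‖ ≤ C * (A.card - (A.image f).card) := by
  classical
  -- `B` is a section of `f` over its image, so only the points of `A \ B` contribute.
  obtain ⟨B, hBA, hinj, himage⟩ :=
    Finset.exists_subset_injOn_image_eq_of_surjOn (f := f) (A : Set α) (A.image f)
      (by simp [Set.SurjOn])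
  rw [Finset.coe_subset] at hBA
  have sum_image_eq : ∑ b ∈ A.image f, y b = ∑ a ∈ B, y (f a) := by
    rw [← himage, Finset.sum_image hinj]
  have card_sdiff_eq : ((A \ B).card : ℝ) = A.card - (A.image f).card := by
    rw [← himage, Finset.card_image_of_injOn hinj, Finset.cast_card_sdiff hBA]
  rw [sum_image_eq, ← Finset.sum_sdiff hBA, add_sub_cancel_right, ← card_sdiff_eq]
  exact norm_sum_le_mul_card (fun a => hy (f a)) _

theorem norm_sum_comp_sub_sum_le_mul_card_symmDiff [DecidableEq α] {y : α → E}
    (hy : ∀ a, ‖y a‖ ≤ C) (f : α → α) (A : Finset α) :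
    ‖∑ a ∈ A, y (f a) - ∑ a ∈ A, y a‖ ≤ 2 * C * (symmDiff (A.image f) A).card := by
  rcases A.eq_empty_or_nonempty with rfl | ⟨a₀, -⟩
  · simp
  have C_nonneg : 0 ≤ C := (norm_nonneg _).trans (hy a₀)
  have card_sub_le : (A.card : ℝ) - (A.image f).card ≤ (symmDiff (A.image f) A).card := by
    have h₁ : A.card - (A.image f).card ≤ (A \ A.image f).card := Finset.le_card_sdiff _ _
    have h₂ : (A \ A.image f).card ≤ (symmDiff (A.image f) A).card :=
      Finset.card_le_card Finset.subset_union_right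
    rw [sub_le_iff_le_add]
    exact_mod_cast tsub_le_iff_right.1 (h₁.trans h₂)
  calc ‖∑ a ∈ A, y (f a) - ∑ a ∈ A, y a‖
      ≤ ‖∑ a ∈ A, y (f a) - ∑ b ∈ A.image f, y b‖
          + ‖∑ b ∈ A.image f, y b - ∑ a ∈ A, y a‖ := norm_sub_le_norm_sub_add_norm_sub _ _ _
    _ ≤ C * (A.card - (A.image f).card) + C * (symmDiff (A.image f) A).card :=
        add_le_add (norm_sum_comp_sub_sum_image_le hy f A)
          (norm_sum_sub_sum_le_mul_card_symmDiff hy _ _)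
    _ ≤ C * (symmDiff (A.image f) A).card + C * (symmDiff (A.image f) A).card := by gcongr
    _ = 2 * C * (symmDiff (A.image f) A).card := by ring

end FinsetSums

section Folner

variable {ι S : Type*} [Semigroup S]

/-- `F` is a Følner net along the filter `l`: the defining condition of `IsFolner` with an arbitrary
filter in place of `atTop` on `ℕ`. -/
structure IsFolnerAlong [DecidableEq S] (l : Filter ι) (F : ι → Finset S) : Prop where
  nonempty : ∀ i, (F i).Nonempty
  tendsto_symmDiff : ∀ s : S, Tendsto
    (fun i => ((symmDiff ((F i).image fun h => s * h) (F i)).card : ℝ) / (F i).card) l (nhds 0)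

theorem IsFolnerAlong.nonempty_semigroup [DecidableEq S] {l : Filter ι} [l.NeBot]
    {F : ι → Finset S} (hF : IsFolnerAlong l F) : Nonempty S := by
  obtain ⟨i⟩ := l.nonempty_of_neBot
  exact (hF.nonempty i).to_type

variable [TopologicalSpace S]

section FolnerAvg

variable (A : Finset S) (x y : S →ᵇ ℝ) (s : S)

theorem folnerAvg_add : folnerAvg A (x + y) s = folnerAvg A x s + folnerAvg A y s := by
  simp [folnerAvg, Finset.sum_add_distrib, add_div]

theorem folnerAvg_smul (c : ℝ) : folnerAvg A (c • x) s = c * folnerAvg A x s := by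
  simp [folnerAvg, ← Finset.mul_sum, mul_div_assoc]

theorem folnerAvg_const {A : Finset S} (hA : A.Nonempty) (c : ℝ) :
    folnerAvg A (const S c) s = c := by
  simp [folnerAvg, hA.ne_empty]

theorem folnerAvg_nonpos {x : S →ᵇ ℝ} (hx : ∀ t, x t ≤ 0) : folnerAvg A x s ≤ 0 :=
  div_nonpos_of_nonpos_of_nonneg (Finset.sum_nonpos fun _ _ => hx _) (Nat.cast_nonneg _)

theorem abs_folnerAvg_le_norm : |folnerAvg A x s| ≤ ‖x‖ := by
  rw [folnerAvg, abs_div, Nat.abs_cast]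
  exact div_le_of_le_mul₀ (Nat.cast_nonneg _) (norm_nonneg _)
    (norm_sum_le_mul_card (fun h => x.norm_coe_le_norm (h * s)) A)

/-- The left translate `t ↦ x (s₀ * t)` of a bounded function on a discrete semigroup, in the form
in which `IsGenLimit` spells it out. -/
abbrev leftTranslate [DiscreteTopology S] (s₀ : S) (x : S →ᵇ ℝ) : S →ᵇ ℝ :=
  x.compContinuous ⟨fun t => s₀ * t, continuous_of_discreteTopology⟩

theorem abs_folnerAvg_leftTranslate_sub_le [DecidableEq S] [DiscreteTopology S] (s₀ : S) :
    |folnerAvg A (leftTranslate s₀ x - x) s| ≤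
      2 * ‖x‖ * ((symmDiff (A.image fun h => s₀ * h) A).card / A.card) := by
  have avg_eq : folnerAvg A (leftTranslate s₀ x - x) s =
      (∑ h ∈ A, x (s₀ * h * s) - ∑ h ∈ A, x (h * s)) / A.card := by
    simp [folnerAvg, mul_assoc]
  rw [avg_eq, abs_div, Nat.abs_cast, ← mul_div_assoc]
  gcongr
  exact norm_sum_comp_sub_sum_le_mul_card_symmDiff (y := fun h => x (h * s))
    (fun h => x.norm_coe_le_norm (h * s)) (fun h => s₀ * h) A

end FolnerAvg

section SupFolnerAvg

/-- The supremum over all right translates of the average over `A`. -/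
noncomputable def supFolnerAvg (A : Finset S) (x : S →ᵇ ℝ) : ℝ :=
  ⨆ s, folnerAvg A x s

variable (A : Finset S) (x y : S →ᵇ ℝ)

theorem folnerAvg_le_supFolnerAvg (s : S) : folnerAvg A x s ≤ supFolnerAvg A x := by
  refine le_ciSup (f := folnerAvg A x) ⟨‖x‖, ?_⟩ s
  rintro _ ⟨t, rfl⟩
  exact (abs_le.1 (abs_folnerAvg_le_norm A x t)).2

theorem supFolnerAvg_smul {c : ℝ} (hc : 0 ≤ c) : supFolnerAvg A (c • x) = c * supFolnerAvg A x := by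
  simp only [supFolnerAvg, folnerAvg_smul, Real.mul_iSup_of_nonneg hc]

variable [Nonempty S]

theorem abs_supFolnerAvg_le_norm : |supFolnerAvg A x| ≤ ‖x‖ := by
  have avg_bounds (s : S) := abs_le.1 (abs_folnerAvg_le_norm A x s)
  obtain ⟨s⟩ := ‹Nonempty S›
  exact abs_le.2 ⟨(avg_bounds s).1.trans (folnerAvg_le_supFolnerAvg A x s),
    ciSup_le fun t => (avg_bounds t).2⟩

theorem supFolnerAvg_add_le : supFolnerAvg A (x + y) ≤ supFolnerAvg A x + supFolnerAvg A y :=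
  ciSup_le fun s => (folnerAvg_add A x y s).trans_le <|
    add_le_add (folnerAvg_le_supFolnerAvg A x s) (folnerAvg_le_supFolnerAvg A y s)

end SupFolnerAvg

section UpperFolnerAvg

/-- The sublinear functional `x ↦ limsup_i sup_s (1/|F i|) ∑_{h ∈ F i} x (h * s)`, with the limsup
taken along an arbitrary filter. -/
noncomputable def upperFolnerAvg (l : Filter ι) (F : ι → Finset S) (x : S →ᵇ ℝ) : ℝ :=
  limsup (fun i => supFolnerAvg (F i) x) l

variable [Nonempty S] (l : Filter ι) (F : ι → Finset S) (x y : S →ᵇ ℝ)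

theorem isBoundedUnder_le_supFolnerAvg :
    IsBoundedUnder (· ≤ ·) l fun i => supFolnerAvg (F i) x :=
  isBoundedUnder_of ⟨‖x‖, fun i => (abs_le.1 (abs_supFolnerAvg_le_norm (F i) x)).2⟩

theorem isBoundedUnder_ge_supFolnerAvg :
    IsBoundedUnder (· ≥ ·) l fun i => supFolnerAvg (F i) x :=
  isBoundedUnder_of ⟨-‖x‖, fun i => (abs_le.1 (abs_supFolnerAvg_le_norm (F i) x)).1⟩

variable [l.NeBot]

theorem upperFolnerAvg_smul {c : ℝ} (hc : 0 ≤ c) :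
    upperFolnerAvg l F (c • x) = c * upperFolnerAvg l F x := by
  simp only [upperFolnerAvg, supFolnerAvg_smul _ x hc]
  exact ((monotone_mul_left_of_nonneg hc).map_limsup_of_continuousAt _
    (continuous_const_mul c).continuousAt (isBoundedUnder_le_supFolnerAvg l F x)
    (isBoundedUnder_ge_supFolnerAvg l F x).isCoboundedUnder_le).symm

theorem upperFolnerAvg_add_le :
    upperFolnerAvg l F (x + y) ≤ upperFolnerAvg l F x + upperFolnerAvg l F y :=
  calc upperFolnerAvg l F (x + y)
      ≤ limsup ((fun i => supFolnerAvg (F i) x) + fun i => supFolnerAvg (F i) y) l :=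
        limsup_le_limsup (.of_forall fun i => supFolnerAvg_add_le (F i) x y)
          (isBoundedUnder_ge_supFolnerAvg l F (x + y)).isCoboundedUnder_le
          (isBoundedUnder_le_add (isBoundedUnder_le_supFolnerAvg l F x)
            (isBoundedUnder_le_supFolnerAvg l F y))
    _ ≤ upperFolnerAvg l F x + upperFolnerAvg l F y :=
        limsup_add_le (isBoundedUnder_ge_supFolnerAvg l F x) (isBoundedUnder_le_supFolnerAvg l F x)
          (isBoundedUnder_ge_supFolnerAvg l F y).isCoboundedUnder_le
          (isBoundedUnder_le_supFolnerAvg l F y)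

variable {l F x}

theorem upperFolnerAvg_le_of_tendsto {b : ι → ℝ} {c : ℝ}
    (hb : ∀ i s, folnerAvg (F i) x s ≤ b i) (hc : Tendsto b l (nhds c)) :
    upperFolnerAvg l F x ≤ c :=
  calc upperFolnerAvg l F x
      ≤ limsup b l :=
        limsup_le_limsup (.of_forall fun i => ciSup_le (hb i))
          (isBoundedUnder_ge_supFolnerAvg l F x).isCoboundedUnder_le hc.isBoundedUnder_le
    _ = c := hc.limsup_eq

end UpperFolnerAvg

section GenLimit

variable [DecidableEq S] [DiscreteTopology S] {l : Filter ι} [l.NeBot] {F : ι → Finset S}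

theorem IsFolnerAlong.upperFolnerAvg_leftTranslate_sub_nonpos [Nonempty S]
    (hF : IsFolnerAlong l F) (s₀ : S) (x : S →ᵇ ℝ) :
    upperFolnerAvg l F (leftTranslate s₀ x - x) ≤ 0 := by
  refine upperFolnerAvg_le_of_tendsto (fun i s => (le_abs_self _).trans
    (abs_folnerAvg_leftTranslate_sub_le (F i) x s s₀)) ?_
  simpa only [mul_zero] using (hF.tendsto_symmDiff s₀).const_mul (2 * ‖x‖)

theorem IsFolnerAlong.isGenLimit_of_le_upperFolnerAvg (hF : IsFolnerAlong l F)
    {Θ : (S →ᵇ ℝ) →ₗ[ℝ] ℝ} (hΘ : ∀ x, Θ x ≤ upperFolnerAvg l F x) : IsGenLimit Θ := by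
  have := hF.nonempty_semigroup
  have map_nonpos (x : S →ᵇ ℝ) (hx : ∀ s, x s ≤ 0) : Θ x ≤ 0 :=
    (hΘ x).trans <|
      upperFolnerAvg_le_of_tendsto (fun i s => folnerAvg_nonpos (F i) s hx) tendsto_const_nhds
  have map_const_le (c : ℝ) : Θ (const S c) ≤ c :=
    (hΘ _).trans <| upperFolnerAvg_le_of_tendsto
      (fun i s => (folnerAvg_const s (hF.nonempty i) c).le) tendsto_const_nhds
  have map_leftTranslate_le (s₀ : S) (x : S →ᵇ ℝ) : Θ (leftTranslate s₀ x) ≤ Θ x := by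
    rw [← sub_nonpos, ← map_sub]
    exact (hΘ _).trans (hF.upperFolnerAvg_leftTranslate_sub_nonpos s₀ x)
  refine ⟨fun x hx => ?_, (map_const_le 1).antisymm ?_,
    fun s₀ x => (map_leftTranslate_le s₀ x).antisymm ?_⟩
  · rw [← neg_nonpos, ← map_neg]
    exact map_nonpos (-x) fun s => neg_nonpos.2 (hx s)
  · rw [← neg_le_neg_iff, ← map_neg]
    exact map_const_le (-1)
  · rw [← neg_le_neg_iff, ← map_neg, ← map_neg]
    exact map_leftTranslate_le s₀ (-x)

theorem exists_generalized_limit_attaining_limsup_general (hF : IsFolnerAlong l F)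
    (x : S →ᵇ ℝ) :
    ∃ Θ : (S →ᵇ ℝ) →ₗ[ℝ] ℝ, IsGenLimit Θ ∧
      Θ x = limsup (fun i => ⨆ s : S, folnerAvg (F i) x s) l := by
  have := hF.nonempty_semigroup
  obtain ⟨Θ, Θ_le, Θ_eq⟩ := exists_linearMap_le_sublinear_apply_eq
    (fun c hc x => upperFolnerAvg_smul l F x hc.le) (fun x y => upperFolnerAvg_add_le l F x y) x
  exact ⟨Θ, hF.isGenLimit_of_le_upperFolnerAvg Θ_le, Θ_eq⟩

end GenLimit

end Folner

theorem exists_generalized_limit_attaining_limsup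
    {S : Type*} [Semigroup S] [Countable S] [DecidableEq S]
    [TopologicalSpace S] [DiscreteTopology S]
    (F : ℕ → Finset S) (hF : IsFolner F)
    (xs : BoundedContinuousFunction S ℝ) :
    ∃ Θ : BoundedContinuousFunction S ℝ →ₗ[ℝ] ℝ, IsGenLimit Θ ∧
      Θ xs = limsup (fun k => ⨆ s : S, folnerAvg (F k) xs s) atTop := by
  exact exists_generalized_limit_attaining_limsup_general ⟨hF.1, hF.2⟩ xs
end

section
/- Let Σ be a countable semigroup and let (Σ_k)_{k≥1} be a Følner sequence of Σ. Then for every x ∈ ℓ∞(Σ) the limit L(x) := lim_{k→∞} ( sup_{s∈Σ} (1/|Σ_k|) Σ_{h∈Σ_k} x_{hs} ) exists; moreover, if (Σ_k')_{k≥1} is another Følner sequence of Σ, then lim_{k→∞} ( sup_{s∈Σ} (1/|Σ_k|) Σ_{h∈Σ_k} x_{hs} ) = lim_{k→∞} ( sup_{s∈Σ} (1/|Σ_k'|) Σ_{h∈Σ_k'} x_{hs} ) for every x ∈ ℓ∞(Σ). -/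
/-!
Both limits equal the infimum, over all non-empty finite `E`, of `sup_s (1/|E|) ∑_{g ∈ E} x_{gs}`.
The averages along a Følner sequence have suprema at least this infimum. Conversely, fix `E`. Since
`F k` is almost invariant under the finitely many `g ∈ E`, the average of `x` over `(F k) s` is,
up to an error tending to `0`, the average of the numbers `x_{ghs}` over `(g, h) ∈ E × F k`.
Averaging over `g` first shows that this is at most the supremum belonging to `E`.
-/

open Filter BoundedContinuousFunction

section SumComp

variable {α : Type*} [DecidableEq α] {f : α → ℝ} {C : ℝ}

lemma sum_le_sum_comp_add_mul_card_sdiff (hf : ∀ a, 0 ≤ f a) (hfC : ∀ a, f a ≤ C)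
    (F : Finset α) (φ : α → α) :
    ∑ a ∈ F, f a ≤ ∑ a ∈ F, f (φ a) + C * (F \ F.image φ).card := by
  have inter_le : ∑ a ∈ F ∩ F.image φ, f a ≤ ∑ a ∈ F, f (φ a) :=
    calc ∑ a ∈ F ∩ F.image φ, f a
      _ ≤ ∑ a ∈ F.image φ, f a :=
        Finset.sum_le_sum_of_subset_of_nonneg Finset.inter_subset_right fun a _ _ => hf a
      _ ≤ ∑ a ∈ F, f (φ a) := Finset.sum_image_le_of_nonneg fun a _ => hf a
  have sdiff_le : ∑ a ∈ F \ F.image φ, f a ≤ C * (F \ F.image φ).card := by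
    simpa only [nsmul_eq_mul, mul_comm] using Finset.sum_le_card_nsmul _ f C fun a _ => hfC a
  rw [← Finset.sum_inter_add_sum_sdiff F (F.image φ)]
  exact add_le_add inter_le sdiff_le

lemma sum_le_sum_comp_add_mul_card_symmDiff (hf : ∀ a, |f a| ≤ C) (F : Finset α) (φ : α → α) :
    ∑ a ∈ F, f a ≤ ∑ a ∈ F, f (φ a) + 2 * C * (symmDiff (F.image φ) F).card := by
  rcases F.eq_empty_or_nonempty with rfl | ⟨a₀, -⟩
  · simp
  have C_nonneg : 0 ≤ C := (abs_nonneg _).trans (hf a₀)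
  have shifted : ∑ a ∈ F, (f a + C) ≤ ∑ a ∈ F, (f (φ a) + C) + 2 * C * (F \ F.image φ).card :=
    sum_le_sum_comp_add_mul_card_sdiff (fun a => by linarith [neg_le_of_abs_le (hf a)])
      (fun a => by linarith [le_of_abs_le (hf a)]) F φ
  have card_le : (F \ F.image φ).card ≤ (symmDiff (F.image φ) F).card :=
    Finset.card_le_card Finset.subset_union_right
  calc ∑ a ∈ F, f a
    _ ≤ ∑ a ∈ F, f (φ a) + 2 * C * (F \ F.image φ).card := by
      simp only [Finset.sum_add_distrib] at shifted
      linarith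
    _ ≤ ∑ a ∈ F, f (φ a) + 2 * C * (symmDiff (F.image φ) F).card := by gcongr

end SumComp

section Folner

open scoped BigOperators Topology

variable {S : Type*} [Semigroup S]

/-- The ratio `|gF △ F| / |F|`, which measures how far `F` is from being invariant under left
translation by `g`; it is `0` for `F = ∅`. -/
noncomputable def translationDefect [DecidableEq S] (g : S) (F : Finset S) : ℝ :=
  ((symmDiff (F.image (fun h => g * h)) F).card : ℝ) / F.card

lemma tendsto_expect_translationDefect [DecidableEq S] {ι : Type*} {l : Filter ι}
    {F : ι → Finset S} (hF : ∀ g, Tendsto (fun k => translationDefect g (F k)) l (𝓝 0))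
    (E : Finset S) :
    Tendsto (fun k => 𝔼 g ∈ E, translationDefect g (F k)) l (𝓝 0) := by
  simpa only [Finset.expect_eq_sum_div_card, Finset.sum_const_zero, zero_div] using
    (tendsto_finsetSum E fun g _ => hF g).div_const (E.card : ℝ)

variable [TopologicalSpace S]

lemma folnerAvg_eq_expect (F : Finset S) (x : BoundedContinuousFunction S ℝ) (s : S) :
    folnerAvg F x s = 𝔼 h ∈ F, x (h * s) :=
  (Finset.expect_eq_sum_div_card F _).symm

lemma abs_folnerAvg_le_norm_s16 {F : Finset S} (hF : F.Nonempty) (x : BoundedContinuousFunction S ℝ)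
    (s : S) : |folnerAvg F x s| ≤ ‖x‖ := by
  rw [folnerAvg_eq_expect]
  exact (Finset.abs_expect_le F _).trans (Finset.expect_le hF fun h _ => x.norm_coe_le_norm _)

lemma folnerAvg_le_iSup {F : Finset S} (hF : F.Nonempty) (x : BoundedContinuousFunction S ℝ)
    (s : S) : folnerAvg F x s ≤ ⨆ t, folnerAvg F x t :=
  le_ciSup (f := folnerAvg F x)
    ⟨‖x‖, Set.forall_mem_range.2 fun t => le_of_abs_le (abs_folnerAvg_le_norm_s16 hF x t)⟩ s

lemma neg_norm_le_iSup_folnerAvg {F : Finset S} (hF : F.Nonempty)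
    (x : BoundedContinuousFunction S ℝ) : -‖x‖ ≤ ⨆ s, folnerAvg F x s :=
  (neg_le_of_abs_le (abs_folnerAvg_le_norm_s16 hF x hF.choose)).trans (folnerAvg_le_iSup hF x _)

lemma iInf_iSup_folnerAvg_le {F : Finset S} (hF : F.Nonempty)
    (x : BoundedContinuousFunction S ℝ) :
    (⨅ E : {E : Finset S // E.Nonempty}, ⨆ s, folnerAvg E.1 x s) ≤ ⨆ s, folnerAvg F x s :=
  ciInf_le (f := fun E : {E : Finset S // E.Nonempty} => ⨆ s, folnerAvg E.1 x s)
    ⟨-‖x‖, Set.forall_mem_range.2 fun E => neg_norm_le_iSup_folnerAvg E.2 x⟩ ⟨F, hF⟩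

variable [DecidableEq S]

lemma folnerAvg_le_expect_mul_add_translationDefect (F : Finset S)
    (x : BoundedContinuousFunction S ℝ) (g s : S) :
    folnerAvg F x s ≤ 𝔼 h ∈ F, x (g * h * s) + 2 * ‖x‖ * translationDefect g F := by
  rw [folnerAvg, Finset.expect_eq_sum_div_card, translationDefect, ← mul_div_assoc, ← add_div]
  gcongr
  exact sum_le_sum_comp_add_mul_card_symmDiff (f := fun h => x (h * s))
    (fun h => x.norm_coe_le_norm _) F (g * ·)

lemma folnerAvg_le_iSup_folnerAvg_add {E F : Finset S} (hE : E.Nonempty) (hF : F.Nonempty)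
    (x : BoundedContinuousFunction S ℝ) (s : S) :
    folnerAvg F x s ≤
      (⨆ t, folnerAvg E x t) + 2 * ‖x‖ * 𝔼 g ∈ E, translationDefect g F :=
  calc folnerAvg F x s
    _ ≤ 𝔼 g ∈ E, (𝔼 h ∈ F, x (g * h * s) + 2 * ‖x‖ * translationDefect g F) :=
      Finset.le_expect hE fun g _ => folnerAvg_le_expect_mul_add_translationDefect F x g s
    _ = 𝔼 h ∈ F, folnerAvg E x (h * s) + 2 * ‖x‖ * 𝔼 g ∈ E, translationDefect g F := by
      simp only [Finset.expect_add_distrib, Finset.mul_expect, folnerAvg_eq_expect, mul_assoc]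
      rw [Finset.expect_comm]
    _ ≤ (⨆ t, folnerAvg E x t) + 2 * ‖x‖ * 𝔼 g ∈ E, translationDefect g F := by
      gcongr
      exact Finset.expect_le hF fun h _ => folnerAvg_le_iSup hE x (h * s)

variable {ι : Type*} {l : Filter ι} {F : ι → Finset S}

lemma eventually_iSup_folnerAvg_lt (hne : ∀ᶠ k in l, (F k).Nonempty)
    (hF : ∀ g, Tendsto (fun k => translationDefect g (F k)) l (𝓝 0)) {E : Finset S}
    (hE : E.Nonempty) {x : BoundedContinuousFunction S ℝ} {b : ℝ}
    (hb : (⨆ s, folnerAvg E x s) < b) : ∀ᶠ k in l, (⨆ s, folnerAvg (F k) x s) < b := by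
  have : Nonempty S := hE.to_type
  have bound_tendsto : Tendsto
      (fun k => (⨆ s, folnerAvg E x s) + 2 * ‖x‖ * 𝔼 g ∈ E, translationDefect g (F k))
      l (𝓝 (⨆ s, folnerAvg E x s)) := by
    simpa only [mul_zero, add_zero] using
      ((tendsto_expect_translationDefect hF E).const_mul (2 * ‖x‖)).const_add _
  filter_upwards [hne, bound_tendsto.eventually_lt_const hb] with k hk hlt
  exact (ciSup_le fun s => folnerAvg_le_iSup_folnerAvg_add hE hk x s).trans_lt hlt

theorem folner_sup_average_limit_exists_and_independent_general
    (hne : ∀ᶠ k in l, (F k).Nonempty)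
    (hF : ∀ g, Tendsto (fun k => translationDefect g (F k)) l (𝓝 0))
    (x : BoundedContinuousFunction S ℝ) :
    Tendsto (fun k => ⨆ s, folnerAvg (F k) x s) l
      (𝓝 (⨅ E : {E : Finset S // E.Nonempty}, ⨆ s, folnerAvg E.1 x s)) := by
  rcases l.eq_or_neBot with rfl | _
  · exact tendsto_bot
  obtain ⟨k₀, hk₀⟩ := hne.exists
  have : Nonempty {E : Finset S // E.Nonempty} := ⟨⟨F k₀, hk₀⟩⟩
  refine tendsto_order.2 ⟨fun a ha => ?_, fun b hb => ?_⟩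
  · exact hne.mono fun k hk => ha.trans_le (iInf_iSup_folnerAvg_le hk x)
  · obtain ⟨⟨E, hE⟩, hEb⟩ := exists_lt_of_ciInf_lt hb
    exact eventually_iSup_folnerAvg_lt hne hF hE hEb

end Folner

theorem folner_sup_average_limit_exists_and_independent
    {S : Type*} [Semigroup S] [Countable S] [DecidableEq S]
    [TopologicalSpace S] [DiscreteTopology S]
    (F F' : ℕ → Finset S) (hF : IsFolner F) (hF' : IsFolner F')
    (x : BoundedContinuousFunction S ℝ) :
    ∃ L : ℝ, Tendsto (fun k => ⨆ s : S, folnerAvg (F k) x s) atTop (nhds L) ∧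
      Tendsto (fun k => ⨆ s : S, folnerAvg (F' k) x s) atTop (nhds L) :=
  ⟨_, folner_sup_average_limit_exists_and_independent_general (.of_forall hF.1) hF.2 x,
    folner_sup_average_limit_exists_and_independent_general (.of_forall hF'.1) hF'.2 x⟩
end
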